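/- (Occupation asymptotics for the RWG.) Suppose p > 0. With i_n, j_n, k_n as below, let I_n = Σ_{ℓ=0}^n i_ℓ, J_n = Σ_{ℓ=0}^n j_ℓ, K_n = Σ_{ℓ=0}^n k_ℓ. Then almost surely I_n/n → 0, J_n/n → p/(2−p), and K_n/n → 0 as n → ∞; moreover, almost surely (J_n/n − p/(2−p))² = O((log n)/n). -/

import Mathlib

open MeasureTheory ProbabilityTheory Real Filter Set
open scoped BigOperators NNReal

noncomputable section

namespace RWG

abbrev E : Type := EuclideanSpace ℝ (Fin 3)

def vec (x y z : ℝ) : E := (EuclideanSpace.equiv (Fin 3) ℝ).symm ![x, y, z]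

/-- The four families of vertices of the `2h` graphite lattice. -/
def V (a h : ℝ) (i j : Fin 2) : Set E :=
  {v | ∃ k l n : ℤ, v =
    vec (a * ((-1 : ℝ) ^ ((i : ℕ) + 1) * (if j = 1 then (1 : ℝ) else 0) + (3 / 2) * k))
        (a * ((Real.sqrt 3 / 2) * k + Real.sqrt 3 * l))
        (h * (2 * n + (if i ≠ j then (1 : ℝ) else 0)))}

/-- Horizontal jump from a vertex of horizontal type `i` in direction `k`. -/
def w (a : ℝ) (i : Fin 2) (k : Fin 3) : E :=
  vec (a * Real.cos (2 * (k : ℕ) * π / 3 + (i : ℕ) * π))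
      (a * Real.sin (2 * (k : ℕ) * π / 3 + (i : ℕ) * π)) 0

/-- `S` is a random walk on graphite with parameters `a, h, p, α, q` and natural filtration `F`. -/
structure IsRWG {Ω : Type} [MeasurableSpace Ω] (P : Measure Ω)
    (a h p α : ℝ) (q : Fin 2 → Fin 2 → Fin 3 → ℝ)
    (S : ℕ → Ω → E) (F : ℕ → MeasurableSpace Ω) : Prop where
  prob : IsProbabilityMeasure P
  ha : 0 < a
  hh : 0 < h
  hp0 : 0 ≤ p
  hp1 : p ≤ 1
  hα0 : 0 < α
  hα1 : α < 1
  hq : ∀ i j k, 0 ≤ q i j k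
  hqsum0 : ∀ i, q i 0 0 + q i 0 1 + q i 0 2 = 1 - p
  hqsum1 : ∀ i, q i 1 0 + q i 1 1 + q i 1 2 = 1
  hS0 : ∀ ω, S 0 ω = 0
  hSmeas : ∀ n, Measurable (S n)
  hF : ∀ n, F n =
    MeasurableSpace.comap (fun ω (k : Fin n) => S ((k : ℕ) + 1) ω - S (k : ℕ) ω)
      MeasurableSpace.pi
  hTrans : ∀ (n : ℕ) (f : E → ℝ), Measurable f → (∃ C, ∀ x, |f x| ≤ C) →
    P[fun ω => f (S (n + 1) ω)|F n] =ᵐ[P]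
      fun ω => ∑ i : Fin 2,
        ((V a h i 0).indicator (fun _ => (1 : ℝ)) (S n ω) *
          (α * p * f (S n ω + vec 0 0 h) + (1 - α) * p * f (S n ω + vec 0 0 (-h)) +
            ∑ k : Fin 3, q i 0 k * f (S n ω + w a i k)) +
        (V a h i 1).indicator (fun _ => (1 : ℝ)) (S n ω) *
          ∑ k : Fin 3, q i 1 k * f (S n ω + w a i k))

def uu (q : Fin 2 → Fin 2 → Fin 3 → ℝ) (i j : Fin 2) : ℝ := q i j 1 + q i j 2

def vv (q : Fin 2 → Fin 2 → Fin 3 → ℝ) (i j : Fin 2) : ℝ := q i j 1 - q i j 2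

def ss (q : Fin 2 → Fin 2 → Fin 3 → ℝ) (i j : Fin 2) : ℝ := uu q i j * (1 - uu q i j)

def tt (q : Fin 2 → Fin 2 → Fin 3 → ℝ) (i j : Fin 2) : ℝ := vv q i j * (uu q i j - 1)

/-- The vector `μ` of the RWG. -/
def muG (a h p α : ℝ) (q : Fin 2 → Fin 2 → Fin 3 → ℝ) : E :=
  vec (3 * a / 8 * (-(uu q 0 0 + uu q 0 1) + (uu q 1 0 + uu q 1 1)))
      (a * Real.sqrt 3 / 8 * ((vv q 0 0 + vv q 0 1) - (vv q 1 0 + vv q 1 1)))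
      (h * p / 2 * (2 * α - 1))

/-- The vector `m` of the RWG. -/
def mG (a h p α : ℝ) (q : Fin 2 → Fin 2 → Fin 3 → ℝ) : E :=
  vec (3 * a / 8 * (-(uu q 0 0 - uu q 0 1) + (uu q 1 0 - uu q 1 1)))
      (a * Real.sqrt 3 / 8 * ((vv q 0 0 - vv q 0 1) - (vv q 1 0 - vv q 1 1)))
      (h * p / 2 * (2 * α - 1))

/-- The vector `θ` of the RWG. -/
def thetaG (a p : ℝ) (q : Fin 2 → Fin 2 → Fin 3 → ℝ) : E :=
  vec (a * ((1 - p / 2) - 3 / 8 * ((uu q 0 0 + uu q 0 1) + (uu q 1 0 + uu q 1 1))))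
      (a * Real.sqrt 3 / 8 * ((vv q 0 0 + vv q 0 1) + (vv q 1 0 + vv q 1 1))) 0

/-- The vector `ρ` of the RWG. -/
def rhoG (a p : ℝ) (q : Fin 2 → Fin 2 → Fin 3 → ℝ) : E :=
  vec (a * (-(p / 2) - 3 / 8 * ((uu q 0 0 - uu q 0 1) + (uu q 1 0 - uu q 1 1))))
      (a * Real.sqrt 3 / 8 * ((vv q 0 0 - vv q 0 1) + (vv q 1 0 - vv q 1 1))) 0

/-- The vector `ζ = (0, 0, hp(2α−1))`. -/
def zetaG (h p α : ℝ) : E := vec 0 0 (h * p * (2 * α - 1))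

/-- The indicator process `i_n`. -/
def iP {Ω : Type} (a h : ℝ) (S : ℕ → Ω → E) (n : ℕ) (ω : Ω) : ℝ :=
  (V a h 0 0 ∪ V a h 0 1).indicator (fun _ => (1 : ℝ)) (S n ω) -
    (V a h 1 0 ∪ V a h 1 1).indicator (fun _ => (1 : ℝ)) (S n ω)

/-- The indicator process `j_n`. -/
def jP {Ω : Type} (a h : ℝ) (S : ℕ → Ω → E) (n : ℕ) (ω : Ω) : ℝ :=
  (V a h 0 0 ∪ V a h 1 0).indicator (fun _ => (1 : ℝ)) (S n ω) -
    (V a h 0 1 ∪ V a h 1 1).indicator (fun _ => (1 : ℝ)) (S n ω)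

/-- The indicator process `k_n`. -/
def kP {Ω : Type} (a h : ℝ) (S : ℕ → Ω → E) (n : ℕ) (ω : Ω) : ℝ :=
  (V a h 0 0 ∪ V a h 1 1).indicator (fun _ => (1 : ℝ)) (S n ω) -
    (V a h 0 1 ∪ V a h 1 0).indicator (fun _ => (1 : ℝ)) (S n ω)

/-- The matrix `σ²` of the RWG. -/
def sigmaG (a h p α : ℝ) (q : Fin 2 → Fin 2 → Fin 3 → ℝ) : Matrix (Fin 3) (Fin 3) ℝ :=
  !![a ^ 2 / 4 * (2 * p * (1 - p) + 9 / 4 * (ss q 0 0 + ss q 1 0 + ss q 0 1 + ss q 1 1)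
        - 3 * p * (uu q 0 0 + uu q 1 0)),
     a ^ 2 * Real.sqrt 3 / 16 * (3 * (tt q 0 0 + tt q 1 0 + tt q 0 1 + tt q 1 1)
        + 2 * p * (vv q 0 0 + vv q 1 0)),
     a * h / 8 * (-4 * p * (1 - p) * (2 * α - 1)
        + 3 * p * (2 * α - 1) * (uu q 0 0 + uu q 1 0));
     a ^ 2 * Real.sqrt 3 / 16 * (3 * (tt q 0 0 + tt q 1 0 + tt q 0 1 + tt q 1 1)
        + 2 * p * (vv q 0 0 + vv q 1 0)),
     3 * a ^ 2 / 16 * ((uu q 0 0 + uu q 1 0 + uu q 0 1 + uu q 1 1)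
        - ((vv q 0 0) ^ 2 + (vv q 1 0) ^ 2 + (vv q 0 1) ^ 2 + (vv q 1 1) ^ 2)),
     -(a * h * Real.sqrt 3 / 8) * (p * (2 * α - 1) * (vv q 0 0 + vv q 1 0));
     a * h / 8 * (-4 * p * (1 - p) * (2 * α - 1)
        + 3 * p * (2 * α - 1) * (uu q 0 0 + uu q 1 0)),
     -(a * h * Real.sqrt 3 / 8) * (p * (2 * α - 1) * (vv q 0 0 + vv q 1 0)),
     h ^ 2 * p / 2 * (1 - p * (2 * α - 1) ^ 2)]

/-- The matrix `γ` of the RWG. -/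
def gammaG (a h p α : ℝ) (q : Fin 2 → Fin 2 → Fin 3 → ℝ) : Matrix (Fin 3) (Fin 3) ℝ :=
  !![a ^ 2 / 4 * (2 * p * (1 - p) + 9 / 4 * (ss q 0 0 + ss q 1 0 - ss q 0 1 - ss q 1 1)
        - 3 * p * (uu q 0 0 + uu q 1 0)),
     a ^ 2 * Real.sqrt 3 / 16 * (3 * (tt q 0 0 + tt q 1 0 - tt q 0 1 - tt q 1 1)
        + 2 * p * (vv q 0 0 + vv q 1 0)),
     a * h / 8 * (-4 * p * (1 - p) * (2 * α - 1)
        + 3 * p * (2 * α - 1) * (uu q 0 0 + uu q 1 0));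
     a ^ 2 * Real.sqrt 3 / 16 * (3 * (tt q 0 0 + tt q 1 0 - tt q 0 1 - tt q 1 1)
        + 2 * p * (vv q 0 0 + vv q 1 0)),
     3 * a ^ 2 / 16 * ((uu q 0 0 + uu q 1 0 - uu q 0 1 - uu q 1 1)
        - ((vv q 0 0) ^ 2 + (vv q 1 0) ^ 2 - (vv q 0 1) ^ 2 - (vv q 1 1) ^ 2)),
     -(a * h * Real.sqrt 3 / 8) * (p * (2 * α - 1) * (vv q 0 0 + vv q 1 0));
     a * h / 8 * (-4 * p * (1 - p) * (2 * α - 1)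
        + 3 * p * (2 * α - 1) * (uu q 0 0 + uu q 1 0)),
     -(a * h * Real.sqrt 3 / 8) * (p * (2 * α - 1) * (vv q 0 0 + vv q 1 0)),
     h ^ 2 * p / 2 * (1 - p * (2 * α - 1) ^ 2)]

/-- The matrix `δ` of the RWG. -/
def deltaG (a h p α : ℝ) (q : Fin 2 → Fin 2 → Fin 3 → ℝ) : Matrix (Fin 3) (Fin 3) ℝ :=
  !![a ^ 2 / 4 * (9 / 4 * (ss q 0 0 - ss q 1 0 - ss q 0 1 + ss q 1 1)
        - 3 * p * (uu q 0 0 - uu q 1 0)),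
     a ^ 2 * Real.sqrt 3 / 16 * (3 * (tt q 0 0 - tt q 1 0 - tt q 0 1 + tt q 1 1)
        + 2 * p * (vv q 0 0 - vv q 1 0)),
     a * h / 8 * (3 * p * (2 * α - 1) * (uu q 0 0 - uu q 1 0));
     a ^ 2 * Real.sqrt 3 / 16 * (3 * (tt q 0 0 - tt q 1 0 - tt q 0 1 + tt q 1 1)
        + 2 * p * (vv q 0 0 - vv q 1 0)),
     3 * a ^ 2 / 16 * ((uu q 0 0 - uu q 1 0 - uu q 0 1 + uu q 1 1)
        - ((vv q 0 0) ^ 2 - (vv q 1 0) ^ 2 - (vv q 0 1) ^ 2 + (vv q 1 1) ^ 2)),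
     -(a * h * Real.sqrt 3 / 8) * (p * (2 * α - 1) * (vv q 0 0 - vv q 1 0));
     a * h / 8 * (3 * p * (2 * α - 1) * (uu q 0 0 - uu q 1 0)),
     -(a * h * Real.sqrt 3 / 8) * (p * (2 * α - 1) * (vv q 0 0 - vv q 1 0)),
     0]

/-- A probability measure on `ℝ³` is the centered Gaussian law with covariance matrix `Γ`
if every linear functional pushes it to the corresponding one-dimensional Gaussian law. -/
def IsCenteredGaussian (G : Measure E) (Γ : Matrix (Fin 3) (Fin 3) ℝ) : Prop :=
  IsProbabilityMeasure G ∧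
    ∀ u : Fin 3 → ℝ, G.map (fun x => ∑ r, u r * x r) =
      gaussianReal 0 (Real.toNNReal (∑ r, ∑ c, u r * Γ r c * u c))

/-- View a point of `ℝ³` as a plain function on indices. -/
def toFun (x : E) : Fin 3 → ℝ := x

end RWG

namespace RWG

/-- `I_n = ∑_{ℓ=0}^n i_ℓ`. -/
def IG {Ω : Type} (a h : ℝ) (S : ℕ → Ω → E) (n : ℕ) (ω : Ω) : ℝ :=
  ∑ l ∈ Finset.range (n + 1), iP a h S l ω

/-- `J_n = ∑_{ℓ=0}^n j_ℓ`. -/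
def JG {Ω : Type} (a h : ℝ) (S : ℕ → Ω → E) (n : ℕ) (ω : Ω) : ℝ :=
  ∑ l ∈ Finset.range (n + 1), jP a h S l ω

/-- `K_n = ∑_{ℓ=0}^n k_ℓ`. -/
def KG {Ω : Type} (a h : ℝ) (S : ℕ → Ω → E) (n : ℕ) (ω : Ω) : ℝ :=
  ∑ l ∈ Finset.range (n + 1), kP a h S l ω

end RWG

/-!
The type `(i, j)` of the vertex `S n` is itself a Markov chain on four states. With
`c = p / (2 - p)`, the functions `(-1) ^ i`, `(-1) ^ j - c` and `(-1) ^ i * ((-1) ^ j - c)` of the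
type are eigenfunctions of its transition operator, with eigenvalues `-1`, `p - 1` and `1 - p`, all
different from `1`; up to combining them, they are the summands of `I_n`, `J_n - c * n` and `K_n`.

If `X` is bounded and `E[X (n + 1) | F n] = r * X n` with `r ≠ 1`, then
`(1 - r) * ∑ l < n, X l + X n` is a martingale with bounded increments, so by Azuma–Hoeffding and
Borel–Cantelli the partial sums of `X` are almost surely `O(√(n log n))`.
-/

open Asymptotics

/-- The chord of `x ↦ exp (t * x)` over `[-c, c]` lies above the graph. -/
lemma exp_mul_le_cosh_add_div_mul_sinh {c x : ℝ} (hx : |x| ≤ c) (t : ℝ) :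
    exp (t * x) ≤ cosh (t * c) + x / c * sinh (t * c) := by
  obtain rfl | hc := ((abs_nonneg x).trans hx).eq_or_lt
  · simp [abs_nonpos_iff.mp hx]
  obtain ⟨hlo, hhi⟩ := abs_le.mp hx
  have hright : 0 ≤ (1 + x / c) / 2 := by
    linarith [(le_div_iff₀ hc).mpr (by linarith : -1 * c ≤ x)]
  have hleft : 0 ≤ (1 - x / c) / 2 := by
    linarith [(div_le_one hc).mpr hhi]
  calc exp (t * x)
      = exp ((1 + x / c) / 2 * (t * c) + (1 - x / c) / 2 * -(t * c)) := by
        congr 1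
        field_simp
        ring
    _ ≤ (1 + x / c) / 2 * exp (t * c) + (1 - x / c) / 2 * exp (-(t * c)) :=
        convexOn_exp.2 (mem_univ _) (mem_univ _) hright hleft (by ring)
    _ = cosh (t * c) + x / c * sinh (t * c) := by
        rw [cosh_eq, sinh_eq]
        ring

section Martingale

variable {Ω : Type*} {mΩ : MeasurableSpace Ω} {μ : Measure Ω}

lemma integrable_exp_mul_mul_of_bound {X Y : Ω → ℝ} {t c : ℝ}
    (hX : Integrable (fun ω => exp (t * X ω)) μ) (hYm : AEStronglyMeasurable Y μ)
    (hY : ∀ᵐ ω ∂μ, |Y ω| ≤ c) : Integrable (fun ω => exp (t * X ω) * exp (t * Y ω)) μ := by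
  refine hX.mul_bdd (c := exp (|t| * c)) (continuous_exp.comp_aestronglyMeasurable
    (hYm.const_mul t)) ?_
  filter_upwards [hY] with ω hω
  rw [norm_eq_abs, abs_exp, exp_le_exp]
  calc t * Y ω ≤ |t| * |Y ω| := (le_abs_self _).trans_eq (abs_mul _ _)
    _ ≤ |t| * c := by gcongr

lemma integral_mul_eq_zero_of_condExp_eq_zero [IsFiniteMeasure μ] {m : MeasurableSpace Ω}
    (hm : m ≤ mΩ) {Z Y : Ω → ℝ} (hZ : StronglyMeasurable[m] Z) (hZY : Integrable (Z * Y) μ)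
    (hY : Integrable Y μ) (hY0 : μ[Y | m] =ᵐ[μ] 0) : ∫ ω, Z ω * Y ω ∂μ = 0 := by
  calc ∫ ω, Z ω * Y ω ∂μ = ∫ ω, (μ[Z * Y | m]) ω ∂μ := (integral_condExp hm).symm
    _ = ∫ _, (0 : ℝ) ∂μ := by
      refine integral_congr_ae ?_
      filter_upwards [condExp_mul_of_stronglyMeasurable_left hZ hZY hY, hY0] with ω hpull hω
      simp [hpull, hω]
    _ = 0 := integral_zero _ _

lemma hasSubgaussianMGF_add_of_condExp_eq_zero [IsFiniteMeasure μ] {m : MeasurableSpace Ω}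
    (hm : m ≤ mΩ) {X Y : Ω → ℝ} {v c : ℝ≥0} (hX : HasSubgaussianMGF X v μ)
    (hXm : StronglyMeasurable[m] X) (hY : Integrable Y μ) (hYc : ∀ᵐ ω ∂μ, |Y ω| ≤ c)
    (hY0 : μ[Y | m] =ᵐ[μ] 0) : HasSubgaussianMGF (X + Y) (v + c ^ 2) μ where
  integrable_exp_mul t := by
    simpa only [Pi.add_apply, mul_add, exp_add] using
      integrable_exp_mul_mul_of_bound (hX.integrable_exp_mul t) hY.1 hYc
  mgf_le t := by
    have hexp := hX.integrable_exp_mul t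
    have hprod : Integrable (fun ω => exp (t * X ω) * Y ω) μ := hexp.mul_bdd hY.1 hYc
    have horth : ∫ ω, exp (t * X ω) * Y ω ∂μ = 0 :=
      integral_mul_eq_zero_of_condExp_eq_zero hm
        (continuous_exp.comp_stronglyMeasurable (hXm.const_mul t)) hprod hY hY0
    calc mgf (X + Y) μ t
        ≤ ∫ ω, (cosh (t * c) * exp (t * X ω) + sinh (t * c) / c * (exp (t * X ω) * Y ω)) ∂μ := by
          simp only [mgf, Pi.add_apply, mul_add, exp_add]
          refine integral_mono_ae (integrable_exp_mul_mul_of_bound hexp hY.1 hYc)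
            ((hexp.const_mul _).add (hprod.const_mul _)) ?_
          filter_upwards [hYc] with ω hω
          calc exp (t * X ω) * exp (t * Y ω)
              ≤ exp (t * X ω) * (cosh (t * c) + Y ω / c * sinh (t * c)) := by
                gcongr
                exact exp_mul_le_cosh_add_div_mul_sinh hω t
            _ = _ := by ring
      _ = cosh (t * c) * mgf X μ t := by
          rw [integral_add (hexp.const_mul _) (hprod.const_mul _), integral_const_mul,
            integral_const_mul, horth, mul_zero, add_zero, mgf]
      _ ≤ exp ((t * c) ^ 2 / 2) * exp (v * t ^ 2 / 2) := by
          gcongr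
          · exact mgf_nonneg
          · exact cosh_le_exp_half_sq _
          · exact hX.mgf_le t
      _ = exp ((v + c ^ 2 : ℝ≥0) * t ^ 2 / 2) := by
          rw [← exp_add]
          push_cast
          ring_nf

/-- **Azuma–Hoeffding**. Mathlib's version rests on `condExpKernel` and so needs a standard Borel
space. -/
lemma hasSubgaussianMGF_sub_of_martingale [IsProbabilityMeasure μ] {ℱ : Filtration ℕ mΩ}
    {M : ℕ → Ω → ℝ} (hM : Martingale M ℱ μ) {c : ℝ≥0}
    (hc : ∀ n, ∀ᵐ ω ∂μ, |M (n + 1) ω - M n ω| ≤ c) (n : ℕ) :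
    HasSubgaussianMGF (M n - M 0) (n * c ^ 2) μ := by
  induction n with
  | zero => simp
  | succ n ih =>
    have hincr : μ[M (n + 1) - M n | ℱ n] =ᵐ[μ] 0 := by
      filter_upwards [condExp_sub (hM.integrable (n + 1)) (hM.integrable n) (ℱ n),
        hM.condExp_ae_eq n.le_succ, hM.condExp_ae_eq (le_refl n)] with ω hsub hnext hself
      simp [hsub, hnext, hself]
    have hstep := hasSubgaussianMGF_add_of_condExp_eq_zero (ℱ.le n) ih
      ((hM.stronglyMeasurable n).sub ((hM.stronglyMeasurable 0).mono (ℱ.mono n.zero_le)))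
      ((hM.integrable (n + 1)).sub (hM.integrable n)) (hc n) hincr
    convert hstep using 1
    · abel
    · push_cast
      ring

lemma measureReal_ge_le_one_div_sq_of_hasSubgaussianMGF {X : Ω → ℝ} {v : ℝ≥0} {n : ℕ}
    (hX : HasSubgaussianMGF X (n * v) μ) (hv : 0 < v) (hn : 0 < n) :
    μ.real {ω | 2 * √(v * (n * log n)) ≤ X ω} ≤ 1 / (n : ℝ) ^ 2 := by
  have hn' : (0 : ℝ) < n := by exact_mod_cast hn
  refine (hX.measure_ge_le (by positivity)).trans_eq ?_
  calc exp (-(2 * √(v * (n * log n))) ^ 2 / (2 * ↑(n * v)))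
      = exp (-(2 * log n)) := by
        rw [mul_pow, sq_sqrt (by positivity)]
        push_cast
        congr 1
        field_simp
    _ = 1 / (n : ℝ) ^ 2 := by
        rw [exp_neg, two_mul, exp_add, exp_log hn', one_div, sq]

lemma ae_eventually_lt_of_hasSubgaussianMGF [IsFiniteMeasure μ] {X : ℕ → Ω → ℝ} {v : ℝ≥0}
    (hX : ∀ n : ℕ, HasSubgaussianMGF (X n) (n * v) μ) (hv : 0 < v) :
    ∀ᵐ ω ∂μ, ∀ᶠ n : ℕ in atTop, X n ω < 2 * √(v * (n * log n)) := by
  have hsum : ∑' n : ℕ, μ {ω | 2 * √(v * ((n + 1 : ℕ) * log (n + 1 : ℕ))) ≤ X (n + 1) ω} ≠ ⊤ := by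
    have hsq : Summable fun n : ℕ => 1 / ((n + 1 : ℕ) : ℝ) ^ 2 :=
      (summable_nat_add_iff 1).mpr (summable_one_div_nat_pow.mpr one_lt_two)
    refine ne_top_of_le_ne_top hsq.tsum_ofReal_ne_top (ENNReal.tsum_le_tsum fun n => ?_)
    rw [← ofReal_measureReal]
    exact ENNReal.ofReal_le_ofReal
      (measureReal_ge_le_one_div_sq_of_hasSubgaussianMGF (hX _) hv n.succ_pos)
  filter_upwards [ae_eventually_notMem hsum] with ω hω
  filter_upwards [(tendsto_sub_atTop_nat 1).eventually hω, eventually_ge_atTop 1] with n hn hn₁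
  rw [Nat.sub_add_cancel hn₁] at hn
  exact not_le.mp hn

lemma ae_isBigO_sqrt_mul_log_of_hasSubgaussianMGF [IsFiniteMeasure μ] {X : ℕ → Ω → ℝ} {v : ℝ≥0}
    (hX : ∀ n : ℕ, HasSubgaussianMGF (X n) (n * v) μ) :
    ∀ᵐ ω ∂μ, (fun n => X n ω) =O[atTop] fun n : ℕ => √(n * log n) := by
  have hX' : ∀ n : ℕ, HasSubgaussianMGF (X n) (n * (v + 1)) μ := fun n =>
    ⟨(hX n).integrable_exp_mul, fun t => ((hX n).mgf_le t).trans (by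
      gcongr
      exact le_self_add)⟩
  filter_upwards [ae_eventually_lt_of_hasSubgaussianMGF hX' (by positivity),
    ae_eventually_lt_of_hasSubgaussianMGF (fun n => (hX' n).neg) (by positivity)] with ω hup hlow
  refine .of_bound (2 * √(v + 1 : ℝ≥0)) ?_
  filter_upwards [hup, hlow] with n hn hn'
  rw [norm_eq_abs, norm_of_nonneg (sqrt_nonneg _), mul_assoc, ← sqrt_mul (by positivity), abs_le]
  exact ⟨(neg_lt.mp hn').le, hn.le⟩

lemma isBigO_one_sqrt_mul_log :
    (fun _ => (1 : ℝ)) =O[atTop] fun n : ℕ => √(n * log n) := by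
  have hlog : Tendsto (fun n : ℕ => log n) atTop atTop :=
    tendsto_log_atTop.comp tendsto_natCast_atTop_atTop
  refine ((isLittleO_one_left_iff ℝ).mpr (tendsto_norm_atTop_atTop.comp ?_)).isBigO
  exact tendsto_sqrt_atTop.comp (tendsto_natCast_atTop_atTop.atTop_mul_atTop₀ hlog)

lemma ae_isBigO_sqrt_mul_log_of_martingale [IsProbabilityMeasure μ] {ℱ : Filtration ℕ mΩ}
    {M : ℕ → Ω → ℝ} (hM : Martingale M ℱ μ) {c : ℝ}
    (hc : ∀ n, ∀ᵐ ω ∂μ, |M (n + 1) ω - M n ω| ≤ c) :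
    ∀ᵐ ω ∂μ, (fun n => M n ω) =O[atTop] fun n : ℕ => √(n * log n) := by
  have hsub := hasSubgaussianMGF_sub_of_martingale hM (c := c.toNNReal) fun n => by
    filter_upwards [hc n] with ω hω using hω.trans (le_coe_toNNReal c)
  filter_upwards [ae_isBigO_sqrt_mul_log_of_hasSubgaussianMGF hsub] with ω hω
  have hM0 : (fun _ => M 0 ω) =O[atTop] fun n : ℕ => √(n * log n) :=
    (isBigO_const_one ℝ (M 0 ω) atTop).trans isBigO_one_sqrt_mul_log
  simpa using hω.add hM0

lemma ae_isBigO_sum_of_condExp_eq_smul [IsProbabilityMeasure μ] {ℱ : Filtration ℕ mΩ}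
    {X : ℕ → Ω → ℝ} {B r : ℝ} (hX : StronglyAdapted ℱ X) (hB : ∀ n ω, |X n ω| ≤ B) (hr : r ≠ 1)
    (hstep : ∀ n, μ[X (n + 1) | ℱ n] =ᵐ[μ] r • X n) :
    ∀ᵐ ω ∂μ, (fun n => ∑ l ∈ Finset.range (n + 1), X l ω) =O[atTop]
      fun n : ℕ => √(n * log n) := by
  have hint : ∀ n, Integrable (X n) μ := fun n =>
    .of_bound ((hX n).mono (ℱ.le n)).aestronglyMeasurable B (ae_of_all _ (hB n))
  set M : ℕ → Ω → ℝ := fun n => (1 - r) • ∑ l ∈ Finset.range n, X l + X n with hM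
  have hincr : ∀ n, M (n + 1) - M n = X (n + 1) - r • X n := fun n => by
    simp only [hM, Finset.sum_range_succ]
    module
  have hMart : Martingale M ℱ μ := by
    refine martingale_of_condExp_sub_eq_zero_nat (fun n => ?_) (fun n => ?_) fun n => ?_
    · exact ((Finset.stronglyMeasurable_sum _ fun l hl =>
        (hX l).mono (ℱ.mono (Finset.mem_range.mp hl).le)).const_smul _).add (hX n)
    · exact ((integrable_finsetSum' _ fun l _ => hint l).smul _).add (hint n)
    · rw [hincr]
      filter_upwards [condExp_sub (hint (n + 1)) ((hint n).smul r) (ℱ n), hstep n] with ω hsub hω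
      rw [hsub, Pi.sub_apply, hω, condExp_of_stronglyMeasurable (ℱ.le n) ((hX n).const_smul r)
        ((hint n).smul r), sub_self, Pi.zero_apply]
  have hbound : ∀ n ω, |M (n + 1) ω - M n ω| ≤ B + |r| * B := fun n ω => by
    calc |M (n + 1) ω - M n ω| = |X (n + 1) ω - r * X n ω| := congrArg _ (congrFun (hincr n) ω)
      _ ≤ |X (n + 1) ω| + |r| * |X n ω| := (abs_sub _ _).trans_eq (by rw [abs_mul])
      _ ≤ B + |r| * B := by gcongr <;> exact hB _ _
  filter_upwards [ae_isBigO_sqrt_mul_log_of_martingale hMart fun n => ae_of_all _ (hbound n)]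
    with ω hω
  have hXn : (fun n => X n ω) =O[atTop] fun n : ℕ => √(n * log n) :=
    (IsBigO.of_bound B (.of_forall fun n => by simpa using hB n ω)).trans isBigO_one_sqrt_mul_log
  refine ((hω.sub (hXn.const_mul_left r)).const_mul_left (1 - r)⁻¹).congr_left fun n => ?_
  have hr' : 1 - r ≠ 0 := sub_ne_zero.mpr hr.symm
  simp only [hM, Finset.sum_range_succ, Pi.add_apply, Pi.smul_apply, Finset.sum_apply, smul_eq_mul]
  field_simp
  ring

end Martingale

section Averages

lemma isBigO_div_sub_sqrt_log_div {Y : ℕ → ℝ} {L : ℝ}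
    (hY : (fun n : ℕ => Y n - L * n) =O[atTop] fun n : ℕ => √(n * log n)) :
    (fun n : ℕ => Y n / n - L) =O[atTop] fun n : ℕ => √(log n / n) := by
  refine (hY.mul (isBigO_refl (fun n : ℕ => (n : ℝ)⁻¹) atTop)).congr' ?_ ?_ <;>
    filter_upwards [eventually_gt_atTop 0] with n hn
  · field_simp
  · have hn' : (0 : ℝ) < n := by exact_mod_cast hn
    rw [← sqrt_sq (inv_nonneg.mpr hn'.le), ← sqrt_mul' _ (sq_nonneg _)]
    congr 1
    field_simp

lemma tendsto_sqrt_log_div_atTop :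
    Tendsto (fun n : ℕ => √(log n / n)) atTop (nhds 0) := by
  have hlog : Tendsto (fun n : ℕ => log n / n) atTop (nhds 0) :=
    isLittleO_log_id_atTop.tendsto_div_nhds_zero.comp tendsto_natCast_atTop_atTop
  simpa using hlog.sqrt

lemma exists_sq_sub_le_of_isBigO_sqrt_log_div {y : ℕ → ℝ} {L : ℝ}
    (hy : (fun n => y n - L) =O[atTop] fun n : ℕ => √(log n / n)) :
    ∃ C > (0 : ℝ), ∃ N₀ : ℕ, ∀ n ≥ N₀, (y n - L) ^ 2 ≤ C * log n / n := by
  obtain ⟨C, hC, hbound⟩ := (hy.pow 2).exists_pos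
  obtain ⟨N₀, hN₀⟩ := eventually_atTop.mp hbound.bound
  refine ⟨C, hC, N₀, fun n hn => ?_⟩
  have hn' := hN₀ n hn
  have hnonneg : 0 ≤ log n / n := div_nonneg (log_natCast_nonneg n) n.cast_nonneg
  rwa [sq_sqrt hnonneg, norm_of_nonneg (sq_nonneg _), norm_of_nonneg hnonneg, ← mul_div_assoc]
    at hn'

end Averages

namespace RWG

section Lattice

variable {a h : ℝ}

lemma vec_add_vec (x y z x' y' z' : ℝ) :
    vec x y z + vec x' y' z' = vec (x + x') (y + y') (z + z') := by
  ext r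
  fin_cases r <;> simp [vec]

lemma eq_and_eq_and_eq_of_vec_eq {x y z x' y' z' : ℝ} (e : vec x y z = vec x' y' z') :
    x = x' ∧ y = y' ∧ z = z' := by
  have e' := (EuclideanSpace.equiv (Fin 3) ℝ).symm.injective e
  exact ⟨congrFun e' 0, congrFun e' 1, congrFun e' 2⟩

lemma countable_V (i j : Fin 2) : (V a h i j).Countable := by
  refine (countable_range fun x : ℤ × ℤ × ℤ => vec
    (a * ((-1 : ℝ) ^ ((i : ℕ) + 1) * (if j = 1 then (1 : ℝ) else 0) + (3 / 2) * x.1))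
    (a * ((√3 / 2) * x.1 + √3 * x.2.1))
    (h * (2 * x.2.2 + (if i ≠ j then (1 : ℝ) else 0)))).mono ?_
  rintro v ⟨k, l, n, rfl⟩
  exact ⟨(k, l, n), rfl⟩

lemma eq_and_eq_of_mem_V (ha : a ≠ 0) (hh : h ≠ 0) {i j i' j' : Fin 2} {v : E}
    (hv : v ∈ V a h i j) (hv' : v ∈ V a h i' j') : i = i' ∧ j = j' := by
  obtain ⟨k, l, n, rfl⟩ := hv
  obtain ⟨k', l', n', e⟩ := hv'
  obtain ⟨hx, -, hz⟩ := eq_and_eq_and_eq_of_vec_eq e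
  have hx : 2 * ((-1) ^ ((i : ℕ) + 1) * (if j = 1 then 1 else 0)) + 3 * k =
      2 * ((-1) ^ ((i' : ℕ) + 1) * (if j' = 1 then 1 else 0)) + 3 * k' := by
    apply Int.cast_injective (α := ℝ)
    push_cast
    linarith [mul_left_cancel₀ ha hx]
  have hz : 2 * n + (if i ≠ j then 1 else 0) = 2 * n' + (if i' ≠ j' then 1 else 0) := by
    exact_mod_cast mul_left_cancel₀ hh hz
  fin_cases i <;> fin_cases j <;> fin_cases i' <;> fin_cases j' <;> simp at hx hz ⊢ <;> omega

lemma mem_V_iff (ha : a ≠ 0) (hh : h ≠ 0) {i j i' j' : Fin 2} {v : E} (hv : v ∈ V a h i j) :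
    v ∈ V a h i' j' ↔ i = i' ∧ j = j' :=
  ⟨eq_and_eq_of_mem_V ha hh hv, fun ⟨hi, hj⟩ => hi ▸ hj ▸ hv⟩

lemma zero_mem_V : (0 : E) ∈ V a h 0 0 := by
  refine ⟨0, 0, 0, ?_⟩
  ext r
  fin_cases r <;> simp [vec]

lemma add_vec_mem_V {i : Fin 2} {v : E} (hv : v ∈ V a h i 0) :
    v + vec 0 0 h ∈ V a h (i + 1) 0 := by
  obtain ⟨k, l, n, rfl⟩ := hv
  have h11 : (1 + 1 : Fin 2) = 0 := rfl
  rw [vec_add_vec]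
  fin_cases i
  · exact ⟨k, l, n, by congr 1 <;> simp; ring⟩
  · exact ⟨k, l, n + 1, by congr 1 <;> simp [h11]; ring⟩

lemma add_vec_neg_mem_V {i : Fin 2} {v : E} (hv : v ∈ V a h i 0) :
    v + vec 0 0 (-h) ∈ V a h (i + 1) 0 := by
  obtain ⟨k, l, n, rfl⟩ := hv
  have h11 : (1 + 1 : Fin 2) = 0 := rfl
  rw [vec_add_vec]
  fin_cases i
  · exact ⟨k, l, n - 1, by congr 1 <;> simp; ring⟩
  · exact ⟨k, l, n, by congr 1 <;> simp [h11]; ring⟩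

lemma w_eq_vec (i : Fin 2) (k : Fin 3) :
    w a i k = vec ((-1) ^ (i : ℕ) * (a * ![1, -1 / 2, -1 / 2] k))
      ((-1) ^ (i : ℕ) * (a * ![0, √3 / 2, -(√3 / 2)] k)) 0 := by
  have hcos₁ : cos (2 * π / 3) = -1 / 2 := by
    rw [show 2 * π / 3 = π - π / 3 by ring, cos_pi_sub, cos_pi_div_three, neg_div]
  have hsin₁ : sin (2 * π / 3) = √3 / 2 := by
    rw [show 2 * π / 3 = π - π / 3 by ring, sin_pi_sub, sin_pi_div_three]
  have hcos₂ : cos (2 * 2 * π / 3) = -1 / 2 := by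
    rw [show 2 * 2 * π / 3 = π / 3 + π by ring, cos_add_pi, cos_pi_div_three, neg_div]
  have hsin₂ : sin (2 * 2 * π / 3) = -(√3 / 2) := by
    rw [show 2 * 2 * π / 3 = π / 3 + π by ring, sin_add_pi, sin_pi_div_three]
  fin_cases i <;> fin_cases k <;>
    simp [w, cos_add_pi, sin_add_pi, hcos₁, hsin₁, hcos₂, hsin₂]

lemma add_w_mem_V {i j : Fin 2} (m : Fin 3) {v : E} (hv : v ∈ V a h i j) :
    v + w a i m ∈ V a h (i + 1) (j + 1) := by
  obtain ⟨k, l, n, rfl⟩ := hv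
  have h11 : (1 + 1 : Fin 2) = 0 := rfl
  rw [w_eq_vec, vec_add_vec]
  fin_cases i <;> fin_cases m
  · exact ⟨k, l, n, by congr 1 <;> fin_cases j <;> simp [h11] <;> ring⟩
  · exact ⟨k - 1, l + 1, n, by congr 1 <;> fin_cases j <;> simp [h11] <;> ring⟩
  · exact ⟨k - 1, l, n, by congr 1 <;> fin_cases j <;> simp [h11] <;> ring⟩
  · exact ⟨k, l, n, by congr 1 <;> fin_cases j <;> simp [h11] <;> ring⟩
  · exact ⟨k + 1, l - 1, n, by congr 1 <;> fin_cases j <;> simp [h11] <;> ring⟩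
  · exact ⟨k + 1, l, n, by congr 1 <;> fin_cases j <;> simp [h11] <;> ring⟩

end Lattice

section TypeFunctions

variable {a h : ℝ} {g : Fin 2 → Fin 2 → ℝ}

/-- The function on space which takes the value `g i j` at the vertices of type `(i, j)`, extended
by `0` off the lattice. -/
def typeFun (a h : ℝ) (g : Fin 2 → Fin 2 → ℝ) (v : E) : ℝ :=
  ∑ i, ∑ j, (V a h i j).indicator (fun _ => g i j) v

lemma typeFun_of_mem (ha : a ≠ 0) (hh : h ≠ 0) {i j : Fin 2} {v : E} (hv : v ∈ V a h i j) :
    typeFun a h g v = g i j := by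
  simp [typeFun, Set.indicator, mem_V_iff ha hh hv, ite_and]

lemma typeFun_of_forall_notMem {v : E} (hv : ∀ i j, v ∉ V a h i j) : typeFun a h g v = 0 := by
  simp [typeFun, hv]

lemma typeFun_smul (r : ℝ) (v : E) : typeFun a h (r • g) v = r * typeFun a h g v := by
  simp only [typeFun, Pi.smul_apply, smul_eq_mul, indicator_const_mul, Finset.mul_sum]

lemma measurable_typeFun : Measurable (typeFun a h g) :=
  Finset.measurable_fun_sum _ fun i _ => Finset.measurable_fun_sum _ fun j _ =>
    measurable_const.indicator (countable_V i j).measurableSet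

lemma abs_typeFun_le (v : E) : |typeFun a h g v| ≤ ∑ i, ∑ j, |g i j| :=
  (Finset.abs_sum_le_sum_abs _ _).trans <| Finset.sum_le_sum fun i _ =>
    (Finset.abs_sum_le_sum_abs _ _).trans <| Finset.sum_le_sum fun j _ =>
      norm_indicator_le_norm_self (fun _ => g i j) v

/-- One-step transition operator of the Markov chain formed by the types `(i, j)` of the vertices
visited by the walk. -/
def typeStep (p : ℝ) (g : Fin 2 → Fin 2 → ℝ) (i j : Fin 2) : ℝ :=
  if j = 0 then p * g (i + 1) 0 + (1 - p) * g (i + 1) 1 else g (i + 1) 0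

lemma typeStep_one (p : ℝ) : typeStep p 1 = 1 := by
  ext i j
  simp [typeStep]

/-- The sign `(-1) ^ i` of a vertex type `(i, j)`, which the process `iP` records. -/
def iSign (i _j : Fin 2) : ℝ := (-1) ^ (i : ℕ)

/-- The sign `(-1) ^ j` of a vertex type `(i, j)`, which the process `jP` records. -/
def jSign (_i j : Fin 2) : ℝ := (-1) ^ (j : ℕ)

lemma typeStep_jSign_sub {p : ℝ} (hp : p ≠ 2) :
    typeStep p (jSign - (p / (2 - p)) • 1) = (p - 1) • (jSign - (p / (2 - p)) • 1) := by
  have hp' : 2 - p ≠ 0 := sub_ne_zero.mpr hp.symm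
  ext i j
  fin_cases j <;> simp [typeStep, jSign] <;> field_simp <;> ring

lemma typeStep_iSign_mul (p : ℝ) (g : Fin 2 → Fin 2 → ℝ) :
    typeStep p (iSign * g) = -(iSign * typeStep p g) := by
  ext i j
  fin_cases i <;> fin_cases j <;> simp [typeStep, iSign]
  all_goals ring

lemma typeStep_iSign (p : ℝ) : typeStep p iSign = (-1 : ℝ) • iSign := by
  simpa [typeStep_one] using typeStep_iSign_mul p 1

lemma typeStep_iSign_mul_jSign_sub {p : ℝ} (hp : p ≠ 2) :
    typeStep p (iSign * (jSign - (p / (2 - p)) • 1)) =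
      (1 - p) • (iSign * (jSign - (p / (2 - p)) • 1)) := by
  rw [typeStep_iSign_mul, typeStep_jSign_sub hp, mul_smul_comm, ← neg_smul, neg_sub]

end TypeFunctions

section Signs

variable {a h : ℝ} {Ω : Type} {S : ℕ → Ω → E} {n : ℕ} {ω : Ω} {i j : Fin 2}

lemma iP_of_mem (ha : a ≠ 0) (hh : h ≠ 0) (hv : S n ω ∈ V a h i j) :
    iP a h S n ω = iSign i j := by
  simp only [iP, iSign, Set.indicator, Set.mem_union, mem_V_iff ha hh hv]
  fin_cases i <;> fin_cases j <;> simp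

lemma jP_of_mem (ha : a ≠ 0) (hh : h ≠ 0) (hv : S n ω ∈ V a h i j) :
    jP a h S n ω = jSign i j := by
  simp only [jP, jSign, Set.indicator, Set.mem_union, mem_V_iff ha hh hv]
  fin_cases i <;> fin_cases j <;> simp

lemma kP_of_mem (ha : a ≠ 0) (hh : h ≠ 0) (hv : S n ω ∈ V a h i j) :
    kP a h S n ω = iSign i j * jSign i j := by
  simp only [kP, iSign, jSign, Set.indicator, Set.mem_union, mem_V_iff ha hh hv]
  fin_cases i <;> fin_cases j <;> simp

end Signs

namespace IsRWG

variable {Ω : Type} [mΩ : MeasurableSpace Ω] {P : Measure Ω} {a h p α : ℝ}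
  {q : Fin 2 → Fin 2 → Fin 3 → ℝ} {S : ℕ → Ω → E} {F : ℕ → MeasurableSpace Ω}
  {g : Fin 2 → Fin 2 → ℝ} {r : ℝ}

lemma measurable_increment (hRW : IsRWG P a h p α q S F) {k n : ℕ} (hkn : k < n) :
    Measurable[F n] fun ω => S (k + 1) ω - S k ω := by
  rw [hRW.hF n]
  exact (measurable_pi_apply (X := fun _ : Fin n => E) ⟨k, hkn⟩).comp
    (comap_measurable fun ω (l : Fin n) => S ((l : ℕ) + 1) ω - S (l : ℕ) ω)

/-- The natural filtration of the walk, as a Mathlib `Filtration`. -/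
def filtration (hRW : IsRWG P a h p α q S F) : Filtration ℕ mΩ where
  seq := F
  mono' m n hmn := by
    have hmeas : Measurable[F n] fun ω (k : Fin m) => S ((k : ℕ) + 1) ω - S (k : ℕ) ω :=
      @measurable_pi_lambda _ _ _ (F n) _ _ fun k => hRW.measurable_increment (k.isLt.trans_le hmn)
    exact (hRW.hF m).trans_le hmeas.comap_le
  le' n := by
    have hmeas : Measurable fun ω (k : Fin n) => S ((k : ℕ) + 1) ω - S (k : ℕ) ω :=
      measurable_pi_lambda _ fun k => (hRW.hSmeas (k + 1)).sub (hRW.hSmeas k)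
    exact (hRW.hF n).trans_le hmeas.comap_le

lemma measurable_position (hRW : IsRWG P a h p α q S F) (n : ℕ) : Measurable[F n] (S n) := by
  have hsum : S n = fun ω => ∑ k ∈ Finset.range n, (S (k + 1) ω - S k ω) := by
    ext1 ω
    rw [Finset.sum_range_sub fun k => S k ω, hRW.hS0, sub_zero]
  rw [hsum]
  exact Finset.measurable_fun_sum _ fun k hk =>
    hRW.measurable_increment (Finset.mem_range.mp hk)

lemma integrable_typeFun (hRW : IsRWG P a h p α q S F) (n : ℕ) :
    Integrable (fun ω => typeFun a h g (S n ω)) P :=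
  have := hRW.prob
  .of_bound (measurable_typeFun.comp (hRW.hSmeas n)).aestronglyMeasurable _
    (ae_of_all _ fun _ => abs_typeFun_le _)

lemma transition_typeFun_eq_typeStep (hRW : IsRWG P a h p α q S F) {i j : Fin 2} {v : E}
    (hv : v ∈ V a h i j) :
    ∑ i : Fin 2,
      ((V a h i 0).indicator (fun _ => (1 : ℝ)) v *
        (α * p * typeFun a h g (v + vec 0 0 h) + (1 - α) * p * typeFun a h g (v + vec 0 0 (-h)) +
          ∑ k : Fin 3, q i 0 k * typeFun a h g (v + w a i k)) +
      (V a h i 1).indicator (fun _ => (1 : ℝ)) v *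
        ∑ k : Fin 3, q i 1 k * typeFun a h g (v + w a i k)) = typeStep p g i j := by
  have ha := hRW.ha.ne'
  have hh := hRW.hh.ne'
  have hw k : typeFun a h g (v + w a i k) = g (i + 1) (j + 1) :=
    typeFun_of_mem ha hh (add_w_mem_V k hv)
  simp only [Set.indicator, mem_V_iff ha hh hv]
  obtain rfl | rfl : j = 0 ∨ j = 1 := by omega
  · have hsum : ∑ k, q i 0 k = 1 - p := by rw [Fin.sum_univ_three, hRW.hqsum0 i]
    have hvertical : α * p * g (i + 1) 0 + (1 - α) * p * g (i + 1) 0 = p * g (i + 1) 0 := by ring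
    simp [typeStep, hw, ← Finset.sum_mul, hsum, hvertical,
      typeFun_of_mem ha hh (add_vec_mem_V hv), typeFun_of_mem ha hh (add_vec_neg_mem_V hv)]
  · have hsum : ∑ k, q i 1 k = 1 := by rw [Fin.sum_univ_three, hRW.hqsum1 i]
    simp [typeStep, hw, ← Finset.sum_mul, hsum]

lemma condExp_typeFun (hRW : IsRWG P a h p α q S F) (n : ℕ) :
    P[fun ω => typeFun a h g (S (n + 1) ω) | F n] =ᵐ[P]
      fun ω => typeFun a h (typeStep p g) (S n ω) := by
  filter_upwards [hRW.hTrans n _ measurable_typeFun ⟨_, abs_typeFun_le⟩] with ω hω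
  rw [hω]
  by_cases hv : ∃ i j, S n ω ∈ V a h i j
  · obtain ⟨i, j, hv⟩ := hv
    rw [hRW.transition_typeFun_eq_typeStep hv, typeFun_of_mem hRW.ha.ne' hRW.hh.ne' hv]
  · push Not at hv
    simp [typeFun_of_forall_notMem hv, hv]

lemma integral_typeFun_one (hRW : IsRWG P a h p α q S F) (n : ℕ) :
    ∫ ω, typeFun a h 1 (S n ω) ∂P = 1 := by
  have := hRW.prob
  induction n with
  | zero => simp [hRW.hS0, typeFun_of_mem hRW.ha.ne' hRW.hh.ne' zero_mem_V]
  | succ n ih =>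
    calc ∫ ω, typeFun a h 1 (S (n + 1) ω) ∂P
        = ∫ ω, (P[fun ω => typeFun a h 1 (S (n + 1) ω) | F n]) ω ∂P :=
          (integral_condExp (hRW.filtration.le n)).symm
      _ = ∫ ω, typeFun a h (typeStep p 1) (S n ω) ∂P :=
          integral_congr_ae (hRW.condExp_typeFun n)
      _ = 1 := by rw [typeStep_one, ih]

lemma ae_exists_mem_V (hRW : IsRWG P a h p α q S F) :
    ∀ᵐ ω ∂P, ∀ n, ∃ i j, S n ω ∈ V a h i j := by
  have := hRW.prob
  refine ae_all_iff.mpr fun n => ?_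
  have hnonneg (v : E) : 0 ≤ 1 - typeFun a h 1 v := by
    by_cases hv : ∃ i j, v ∈ V a h i j
    · obtain ⟨i, j, hv⟩ := hv
      simp [typeFun_of_mem hRW.ha.ne' hRW.hh.ne' hv]
    · push Not at hv
      simp [typeFun_of_forall_notMem hv]
  have hzero : ∫ ω, (1 - typeFun a h 1 (S n ω)) ∂P = 0 := by
    rw [integral_sub (integrable_const 1) (hRW.integrable_typeFun n), hRW.integral_typeFun_one]
    simp
  filter_upwards [(integral_eq_zero_iff_of_nonneg (fun ω => hnonneg (S n ω))
    ((integrable_const 1).sub (hRW.integrable_typeFun n))).mp hzero] with ω hω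
  by_contra! hv
  simp [typeFun_of_forall_notMem hv] at hω

lemma ae_isBigO_sum_typeFun (hRW : IsRWG P a h p α q S F) (hg : typeStep p g = r • g)
    (hr : r ≠ 1) :
    ∀ᵐ ω ∂P, (fun n => ∑ l ∈ Finset.range (n + 1), typeFun a h g (S l ω)) =O[atTop]
      fun n : ℕ => √(n * log n) := by
  have := hRW.prob
  refine ae_isBigO_sum_of_condExp_eq_smul (ℱ := hRW.filtration)
    (X := fun l ω => typeFun a h g (S l ω))
    (fun n => (measurable_typeFun.comp (hRW.measurable_position n)).stronglyMeasurable)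
    (fun _ _ => abs_typeFun_le _) hr fun n => ?_
  filter_upwards [hRW.condExp_typeFun n] with ω hω
  rw [hg, typeFun_smul] at hω
  exact hω

lemma ae_isBigO_IG (hRW : IsRWG P a h p α q S F) :
    ∀ᵐ ω ∂P, (fun n => IG a h S n ω) =O[atTop] fun n : ℕ => √(n * log n) := by
  filter_upwards [hRW.ae_exists_mem_V, hRW.ae_isBigO_sum_typeFun (typeStep_iSign p) (by norm_num)]
    with ω hmem hω
  refine hω.congr_left fun n => Finset.sum_congr rfl fun l _ => ?_
  obtain ⟨i, j, hv⟩ := hmem l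
  rw [typeFun_of_mem hRW.ha.ne' hRW.hh.ne' hv, iP_of_mem hRW.ha.ne' hRW.hh.ne' hv]

lemma ae_isBigO_JG_sub (hRW : IsRWG P a h p α q S F) :
    ∀ᵐ ω ∂P, (fun n : ℕ => JG a h S n ω - p / (2 - p) * n) =O[atTop]
      fun n : ℕ => √(n * log n) := by
  filter_upwards [hRW.ae_exists_mem_V, hRW.ae_isBigO_sum_typeFun
    (typeStep_jSign_sub (hRW.hp1.trans_lt one_lt_two).ne) (by linarith [hRW.hp1] : p - 1 < 1).ne]
    with ω hmem hω
  have hconst := (isBigO_const_one ℝ (p / (2 - p)) atTop).trans isBigO_one_sqrt_mul_log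
  refine (hω.add hconst).congr_left fun n => ?_
  have hval l : typeFun a h (jSign - (p / (2 - p)) • 1) (S l ω) = jP a h S l ω - p / (2 - p) := by
    obtain ⟨i, j, hv⟩ := hmem l
    simp [typeFun_of_mem hRW.ha.ne' hRW.hh.ne' hv, jP_of_mem hRW.ha.ne' hRW.hh.ne' hv]
  simp only [hval, Finset.sum_sub_distrib, Finset.sum_const, Finset.card_range, JG]
  push_cast [nsmul_eq_mul]
  ring

lemma ae_isBigO_KG (hRW : IsRWG P a h p α q S F) (hp : p ≠ 0) :
    ∀ᵐ ω ∂P, (fun n => KG a h S n ω) =O[atTop] fun n : ℕ => √(n * log n) := by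
  filter_upwards [hRW.ae_exists_mem_V, hRW.ae_isBigO_IG, hRW.ae_isBigO_sum_typeFun
    (typeStep_iSign_mul_jSign_sub (hRW.hp1.trans_lt one_lt_two).ne) (by simpa using hp)]
    with ω hmem hI hω
  refine (hω.add (hI.const_mul_left (p / (2 - p)))).congr_left fun n => ?_
  rw [IG, KG, Finset.mul_sum, ← Finset.sum_add_distrib]
  refine Finset.sum_congr rfl fun l _ => ?_
  obtain ⟨i, j, hv⟩ := hmem l
  rw [typeFun_of_mem hRW.ha.ne' hRW.hh.ne' hv, iP_of_mem hRW.ha.ne' hRW.hh.ne' hv,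
    kP_of_mem hRW.ha.ne' hRW.hh.ne' hv]
  simp only [Pi.mul_apply, Pi.sub_apply, Pi.smul_apply, Pi.one_apply, smul_eq_mul]
  ring

end IsRWG

end RWG

theorem rwg_occupation {Ω : Type} [MeasurableSpace Ω] (P : Measure Ω)
    (a h p α : ℝ) (q : Fin 2 → Fin 2 → Fin 3 → ℝ)
    (S : ℕ → Ω → RWG.E) (F : ℕ → MeasurableSpace Ω)
    (hRW : RWG.IsRWG P a h p α q S F) (hp : 0 < p) :
    (∀ᵐ ω ∂P, Tendsto (fun n : ℕ => RWG.IG a h S n ω / n) atTop (nhds 0)) ∧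
    (∀ᵐ ω ∂P, Tendsto (fun n : ℕ => RWG.JG a h S n ω / n) atTop (nhds (p / (2 - p)))) ∧
    (∀ᵐ ω ∂P, Tendsto (fun n : ℕ => RWG.KG a h S n ω / n) atTop (nhds 0)) ∧
    (∀ᵐ ω ∂P, ∃ C > (0 : ℝ), ∃ N₀ : ℕ, ∀ n ≥ N₀,
      (RWG.JG a h S n ω / n - p / (2 - p)) ^ 2 ≤ C * Real.log n / n) := by
  have hI : ∀ᵐ ω ∂P, (fun n : ℕ => RWG.IG a h S n ω / n - 0) =O[atTop]
      fun n : ℕ => √(log n / n) := by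
    filter_upwards [hRW.ae_isBigO_IG] with ω hω
    exact isBigO_div_sub_sqrt_log_div (by simpa using hω)
  have hJ : ∀ᵐ ω ∂P, (fun n : ℕ => RWG.JG a h S n ω / n - p / (2 - p)) =O[atTop]
      fun n : ℕ => √(log n / n) := by
    filter_upwards [hRW.ae_isBigO_JG_sub] with ω hω
    exact isBigO_div_sub_sqrt_log_div hω
  have hK : ∀ᵐ ω ∂P, (fun n : ℕ => RWG.KG a h S n ω / n - 0) =O[atTop]
      fun n : ℕ => √(log n / n) := by
    filter_upwards [hRW.ae_isBigO_KG hp.ne'] with ω hω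
    exact isBigO_div_sub_sqrt_log_div (by simpa using hω)
  have htendsto {y : ℕ → ℝ} {L : ℝ} (hy : (fun n => y n - L) =O[atTop] fun n : ℕ => √(log n / n)) :
      Tendsto y atTop (nhds L) :=
    tendsto_sub_nhds_zero_iff.mp (hy.trans_tendsto tendsto_sqrt_log_div_atTop)
  exact ⟨hI.mono fun _ => htendsto, hJ.mono fun _ => htendsto, hK.mono fun _ => htendsto,
    hJ.mono fun _ => exists_sq_sub_le_of_isBigO_sqrt_log_div⟩
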